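/- Let n ≥ 4, let 𝒢 be a degree-doubling family of Hamiltonian cycles on Fin n, and let a, b be distinct vertices of Fin n. Then the number of members H of 𝒢 for which a and b are adjacent in H is at most the maximum cardinality of a degree-doubling family of Hamiltonian paths on Fin n. -/

import Mathlib

/-!
Deleting the edge `ab` from a Hamiltonian cycle through `ab` leaves a Hamiltonian path with
endpoints `a` and `b`: an edge of a 2-regular graph lies on a cycle
(`SimpleGraph.IsCycles.reachable_deleteEdges`), so deleting it preserves connectedness.
The edge `ab` can be restored, so this map is injective. It also preserves degree-doubling: if two
2-regular graphs both contain `ab`, then `b` is a neighbour of `a` in both, so `a` has degree at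
most 3 in their union, and likewise `b`. A vertex of degree 4 is therefore neither `a` nor `b`,
and deleting `ab` does not change its degree.
-/

open SimpleGraph

/-- The degree of a vertex `v` in a simple graph `G` on `Fin n`. -/
noncomputable def deg {n : ℕ} (G : SimpleGraph (Fin n)) (v : Fin n) : ℕ :=
  Nat.card (G.neighborSet v)

/-- A Hamiltonian cycle on `Fin n`: a connected, 2-regular simple graph. -/
def IsHamCycle {n : ℕ} (G : SimpleGraph (Fin n)) : Prop :=
  G.Connected ∧ ∀ v, deg G v = 2

/-- A family of graphs is degree-doubling if the union of any two distinct
members has a vertex of degree 4. -/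
def DegreeDoubling {n : ℕ} (𝒢 : Finset (SimpleGraph (Fin n))) : Prop :=
  ∀ F ∈ 𝒢, ∀ G ∈ 𝒢, F ≠ G → ∃ v, deg (F ⊔ G) v = 4

/-- A Hamiltonian path on `Fin n`: a connected simple graph with exactly two
vertices of degree 1 and all other vertices of degree 2. -/
def IsHamPath {n : ℕ} (G : SimpleGraph (Fin n)) : Prop :=
  G.Connected ∧ ∃ a b : Fin n, a ≠ b ∧ deg G a = 1 ∧ deg G b = 1 ∧
    ∀ v : Fin n, v ≠ a → v ≠ b → deg G v = 2

/-- The maximum cardinality of a degree-doubling family of graphs on `Fin n`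
all of whose members satisfy `pred`. -/
noncomputable def maxDD (n : ℕ) (pred : SimpleGraph (Fin n) → Prop) : ℕ :=
  sSup {k | ∃ 𝒢 : Finset (SimpleGraph (Fin n)),
    (∀ G ∈ 𝒢, pred G) ∧ DegreeDoubling 𝒢 ∧ 𝒢.card = k}

lemma adj_deleteEdge_iff {n : ℕ} {G : SimpleGraph (Fin n)} {a b u v : Fin n} :
    (G.deleteEdges {s(a, b)}).Adj u v ↔ G.Adj u v ∧ s(u, v) ≠ s(a, b) := by
  simp

lemma neighborSet_deleteEdge_left {n : ℕ} (G : SimpleGraph (Fin n)) (a b : Fin n) :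
    (G.deleteEdges {s(a, b)}).neighborSet a = G.neighborSet a \ {b} := by
  ext v
  simp only [mem_neighborSet, adj_deleteEdge_iff, Set.mem_sdiff, Set.mem_singleton_iff]
  grind [Sym2.eq_iff]

lemma neighborSet_deleteEdge_of_ne {n : ℕ} (G : SimpleGraph (Fin n)) {a b v : Fin n}
    (ha : v ≠ a) (hb : v ≠ b) :
    (G.deleteEdges {s(a, b)}).neighborSet v = G.neighborSet v := by
  ext w
  simp only [mem_neighborSet, adj_deleteEdge_iff]
  grind [Sym2.eq_iff]

lemma deg_deleteEdge_left {n : ℕ} {G : SimpleGraph (Fin n)} {a b : Fin n} (h : G.Adj a b)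
    (hd : deg G a = 2) : deg (G.deleteEdges {s(a, b)}) a = 1 := by
  have hd' : (G.neighborSet a).ncard = 2 := hd
  change ((G.deleteEdges {s(a, b)}).neighborSet a).ncard = 1
  rw [neighborSet_deleteEdge_left, Set.ncard_sdiff_singleton_of_mem (by simpa using h), hd']

lemma connected_deleteEdge {n : ℕ} {G : SimpleGraph (Fin n)} (hG : IsHamCycle G) {a b : Fin n}
    (h : G.Adj a b) : (G.deleteEdges {s(a, b)}).Connected := by
  have hcyc : G.IsCycles := fun v _ => hG.2 v
  refine hG.1.connected_delete_edge_of_not_isBridge ?_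
  rw [isBridge_iff, not_not]
  exact hcyc.reachable_deleteEdges h

lemma isHamPath_deleteEdge {n : ℕ} {G : SimpleGraph (Fin n)} (hG : IsHamCycle G) {a b : Fin n}
    (h : G.Adj a b) : IsHamPath (G.deleteEdges {s(a, b)}) := by
  refine ⟨connected_deleteEdge hG h, a, b, h.ne, deg_deleteEdge_left h (hG.2 a), ?_, ?_⟩
  · rw [Sym2.eq_swap]
    exact deg_deleteEdge_left h.symm (hG.2 b)
  · intro v ha hb
    have hd := hG.2 v
    unfold deg at hd ⊢
    rwa [neighborSet_deleteEdge_of_ne G ha hb]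

/-- Two neighbourhoods of size 2 sharing the element `b` have a union of size at most 3. -/
lemma deg_sup_ne_four {n : ℕ} {F G : SimpleGraph (Fin n)} {a b : Fin n}
    (hF : F.Adj a b) (hG : G.Adj a b) (hF2 : deg F a = 2) (hG2 : deg G a = 2) :
    deg (F ⊔ G) a ≠ 4 := by
  have hF2' : (F.neighborSet a).ncard = 2 := hF2
  have hG2' : (G.neighborSet a).ncard = 2 := hG2
  change ((F ⊔ G).neighborSet a).ncard ≠ 4
  have hU : (F ⊔ G).neighborSet a = F.neighborSet a ∪ G.neighborSet a := by
    ext v; simp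
  have hI : 0 < (F.neighborSet a ∩ G.neighborSet a).ncard :=
    (Set.ncard_pos).2 ⟨b, hF, hG⟩
  have := Set.ncard_union_add_ncard_inter (F.neighborSet a) (G.neighborSet a)
  rw [hU]
  omega

lemma deleteEdge_injOn {n : ℕ} (a b : Fin n) :
    Set.InjOn (fun G : SimpleGraph (Fin n) => G.deleteEdges {s(a, b)}) {G | G.Adj a b} := by
  intro F hF G hG h
  ext u v
  by_cases huv : s(u, v) = s(a, b)
  · rw [← mem_edgeSet, ← mem_edgeSet, huv]
    exact iff_of_true hF hG
  · have := congrArg (fun H : SimpleGraph (Fin n) => H.Adj u v) h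
    simpa only [adj_deleteEdge_iff, ne_eq, huv, not_false_eq_true, and_true, eq_iff_iff] using this

/-- Every admissible family is bounded in size by `maxDD`: family sizes are bounded
because there are finitely many graphs, so the supremum in `ℕ` is not a junk value. -/
lemma card_le_maxDD {n : ℕ} {pred : SimpleGraph (Fin n) → Prop} {P : Finset (SimpleGraph (Fin n))}
    (hp : ∀ G ∈ P, pred G) (hdd : DegreeDoubling P) : P.card ≤ maxDD n pred := by
  classical
  refine le_csSup ⟨Fintype.card (SimpleGraph (Fin n)), ?_⟩ ⟨P, hp, hdd, rfl⟩
  rintro k ⟨𝒬, -, -, rfl⟩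
  exact Finset.card_le_univ 𝒬

theorem stmt_16 (n : ℕ) (hn : 4 ≤ n) (𝒢 : Finset (SimpleGraph (Fin n)))
    (hham : ∀ G ∈ 𝒢, IsHamCycle G) (hdd : DegreeDoubling 𝒢)
    (a b : Fin n) (hab : a ≠ b) :
    Set.ncard {H : SimpleGraph (Fin n) | H ∈ 𝒢 ∧ H.Adj a b} ≤ maxDD n IsHamPath := by
  classical
  have hset : {H : SimpleGraph (Fin n) | H ∈ 𝒢 ∧ H.Adj a b} =
      (𝒢.filter fun H => H.Adj a b : Finset (SimpleGraph (Fin n))) := by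
    ext H; simp
  have hinj : Set.InjOn (fun G : SimpleGraph (Fin n) => G.deleteEdges {s(a, b)})
      (𝒢.filter fun H => H.Adj a b : Finset (SimpleGraph (Fin n))) :=
    (deleteEdge_injOn a b).mono fun H hH => (Finset.mem_filter.1 hH).2
  rw [hset, Set.ncard_coe_finset, ← Finset.card_image_of_injOn hinj]
  apply card_le_maxDD
  · intro P hP
    obtain ⟨G, hG, rfl⟩ := Finset.mem_image.1 hP
    obtain ⟨hG, hGab⟩ := Finset.mem_filter.1 hG
    exact isHamPath_deleteEdge (hham G hG) hGab
  · intro P hP Q hQ hPQ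
    obtain ⟨F, hF, rfl⟩ := Finset.mem_image.1 hP
    obtain ⟨G, hG, rfl⟩ := Finset.mem_image.1 hQ
    obtain ⟨hF', hFab⟩ := Finset.mem_filter.1 hF
    obtain ⟨hG', hGab⟩ := Finset.mem_filter.1 hG
    obtain ⟨v, hv⟩ := hdd F hF' G hG' fun h => hPQ (by rw [h])
    have hva : v ≠ a := by
      rintro rfl
      exact deg_sup_ne_four hFab hGab ((hham F hF').2 _) ((hham G hG').2 _) hv
    have hvb : v ≠ b := by
      rintro rfl
      exact deg_sup_ne_four hFab.symm hGab.symm ((hham F hF').2 _) ((hham G hG').2 _) hv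
    refine ⟨v, ?_⟩
    have hsup : F.deleteEdges {s(a, b)} ⊔ G.deleteEdges {s(a, b)} =
        (F ⊔ G).deleteEdges {s(a, b)} := by
      ext u w
      simp only [sup_adj, adj_deleteEdge_iff]
      tauto
    unfold deg at hv ⊢
    rwa [hsup, neighborSet_deleteEdge_of_ne _ hva hvb]
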